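/- For every n ≥ 2, every connected parity-reversing pairing on [2n] has at least n crossings; that is, b_{n,k} = 0 whenever k < n. -/

import Mathlib

open scoped Classical

/-- Asymmetric crossing of two chords: `B = {a,b}` with `a < b` starts strictly
before `C = {c,d}` and they interleave: `a < c < b < d`. -/
def CrossAsym (B C : Finset ℕ) : Prop :=
  ∃ a b c d : ℕ, a < c ∧ c < b ∧ b < d ∧ B = {a, b} ∧ C = {c, d}

/-- Two blocks cross: `a < c < b < d` or `c < a < d < b`. -/
def Crosses (B C : Finset ℕ) : Prop := CrossAsym B C ∨ CrossAsym C B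

/-- A pairing on `[2n] = {1, …, 2n}`: a partition of `{1, …, 2n}` into blocks of size 2. -/
def IsPairing (n : ℕ) (π : Finset (Finset ℕ)) : Prop :=
  (∀ B ∈ π, B.card = 2 ∧ B ⊆ Finset.Icc 1 (2 * n)) ∧
  (∀ x ∈ Finset.Icc 1 (2 * n), ∃! B, B ∈ π ∧ x ∈ B)

/-- Number of crossings of a pairing: the number of unordered pairs of blocks that cross
(each crossing unordered pair `{B, C}` satisfies the asymmetric condition exactly once). -/
noncomputable def crNum (π : Finset (Finset ℕ)) : ℕ :=
  Set.ncard {p : Finset ℕ × Finset ℕ | p.1 ∈ π ∧ p.2 ∈ π ∧ CrossAsym p.1 p.2}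

/-- A pairing is parity-reversing if each block consists of one odd and one even number. -/
def ParityReversing (π : Finset (Finset ℕ)) : Prop :=
  ∀ B ∈ π, ∃ a b : ℕ, B = {a, b} ∧ Odd a ∧ Even b

/-- A pairing is connected if its blocks cannot be split into two nonempty families
with no crossing between the families. -/
def ConnectedPairing (π : Finset (Finset ℕ)) : Prop :=
  ¬ ∃ S T : Finset (Finset ℕ), S ∪ T = π ∧ Disjoint S T ∧ S.Nonempty ∧ T.Nonempty ∧
      ∀ B ∈ S, ∀ C ∈ T, ¬ Crosses B C

/-- `tCount n k`: the number of pairings on `[2n]` with exactly `k` crossings. -/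
noncomputable def tCount (n k : ℕ) : ℕ :=
  Set.ncard {π : Finset (Finset ℕ) | IsPairing n π ∧ crNum π = k}

/-- `rCount n k`: the number of parity-reversing pairings on `[2n]` with exactly `k` crossings. -/
noncomputable def rCount (n k : ℕ) : ℕ :=
  Set.ncard {π : Finset (Finset ℕ) | IsPairing n π ∧ ParityReversing π ∧ crNum π = k}

/-- `bCount n k`: the number of connected parity-reversing pairings on `[2n]`
with exactly `k` crossings. -/
noncomputable def bCount (n k : ℕ) : ℕ :=
  Set.ncard {π : Finset (Finset ℕ) |
    IsPairing n π ∧ ParityReversing π ∧ ConnectedPairing π ∧ crNum π = k}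

/-- `bTot n`: the number of connected parity-reversing pairings on `[2n]` (equals 1 for `n = 0`). -/
noncomputable def bTot (n : ℕ) : ℕ :=
  Set.ncard {π : Finset (Finset ℕ) |
    IsPairing n π ∧ ParityReversing π ∧ ConnectedPairing π}

/-- The Touchard alternating sum `∑_{k=-n}^n (-1)^k q^{k(k-1)/2} C(2n, n+k)`. -/
noncomputable def touchardSum (n : ℕ) (q : ℂ) : ℂ :=
  ∑ k ∈ Finset.Icc (-(n : ℤ)) (n : ℤ),
    (-1 : ℂ) ^ k * q ^ ((k * (k - 1)) / 2).toNat * ((2 * n).choose ((n : ℤ) + k).toNat : ℂ)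

/-- `T_n(q) = ∑_k t_{n,k} q^k` as a complex polynomial function
(all crossing numbers of pairings on `[2n]` satisfy `k ≤ n*n`). -/
noncomputable def Tpoly (n : ℕ) (q : ℂ) : ℂ :=
  ∑ k ∈ Finset.range (n * n + 1), (tCount n k : ℂ) * q ^ k

/-- `T_n(q) = ∑_k t_{n,k} q^k` as a real polynomial function. -/
noncomputable def TpolyR (n : ℕ) (q : ℝ) : ℝ :=
  ∑ k ∈ Finset.range (n * n + 1), (tCount n k : ℝ) * q ^ k

/-- `R_n(q) = ∑_k r_{n,k} q^k` as a real polynomial function. -/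
noncomputable def RpolyR (n : ℕ) (q : ℝ) : ℝ :=
  ∑ k ∈ Finset.range (n * n + 1), (rCount n k : ℝ) * q ^ k

/-- Non-crossing partitions of `{1, …, 2n}` all of whose blocks have even size. -/
noncomputable def NCEvenPartitions (n : ℕ) : Finset (Finset (Finset ℕ)) :=
  ((Finset.Icc 1 (2 * n)).powerset.powerset).filter (fun π =>
    (∀ B ∈ π, B.Nonempty ∧ Even B.card) ∧
    (∀ x ∈ Finset.Icc 1 (2 * n), ∃! B, B ∈ π ∧ x ∈ B) ∧
    ¬ ∃ a b c d : ℕ, a < b ∧ b < c ∧ c < d ∧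
        ∃ B ∈ π, ∃ C ∈ π, B ≠ C ∧ a ∈ B ∧ c ∈ B ∧ b ∈ C ∧ d ∈ C)

lemma pair_ord {a b c d : ℕ} (h1 : a < b) (h2 : c < d) (h : ({a, b} : Finset ℕ) = {c, d}) :
    a = c ∧ b = d := by
  have ha : a ∈ ({c, d} : Finset ℕ) := by rw [← h]; simp
  have hb : b ∈ ({c, d} : Finset ℕ) := by rw [← h]; simp
  simp only [Finset.mem_insert, Finset.mem_singleton] at ha hb
  omega

lemma crossAsym_pair {a b c d : ℕ} (h1 : a < b) (h2 : c < d) :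
    CrossAsym {a, b} {c, d} ↔ a < c ∧ c < b ∧ b < d := by
  constructor
  · rintro ⟨a', b', c', d', x, y, z, e, f⟩
    have := pair_ord h1 (by omega) e
    have := pair_ord h2 (by omega) f
    omega
  · rintro ⟨x, y, z⟩
    exact ⟨a, b, c, d, x, y, z, rfl, rfl⟩

lemma card_two_ord {C : Finset ℕ} (h : C.card = 2) : ∃ c d, c < d ∧ C = {c, d} := by
  obtain ⟨c, d, hne, rfl⟩ := Finset.card_eq_two.mp h
  rcases lt_or_gt_of_ne hne with h | h
  · exact ⟨c, d, h, rfl⟩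
  · exact ⟨d, c, h, Finset.pair_comm _ _⟩

lemma card_inter_mod {a b : ℕ} (hab : a < b) {C : Finset ℕ} (hC : C.card = 2)
    (hd : C = {a, b} ∨ (a ∉ C ∧ b ∉ C)) :
    (C ∩ Finset.Ioo a b).card % 2 = if Crosses {a, b} C then 1 else 0 := by
  obtain ⟨c, d, hcd, rfl⟩ := card_two_ord hC
  have key : (c = a ∧ d = b) ∨ (a ≠ c ∧ a ≠ d ∧ b ≠ c ∧ b ≠ d) := by
    rcases hd with h | h
    · left; exact pair_ord hcd hab h
    · right; simp at h; tauto
  have e : (({c, d} : Finset ℕ) ∩ Finset.Ioo a b).card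
      = (if a < c ∧ c < b then 1 else 0) + (if a < d ∧ d < b then 1 else 0) := by
    rw [← Finset.filter_mem_eq_inter, Finset.card_filter, Finset.sum_pair hcd.ne]
    simp only [Finset.mem_Ioo]
  rw [e]
  unfold Crosses
  rw [crossAsym_pair hab hcd, crossAsym_pair hcd hab]
  split_ifs <;> omega

lemma sum_card_inter {n : ℕ} {π : Finset (Finset ℕ)} (h : IsPairing n π) (s : Finset ℕ)
    (hs : s ⊆ Finset.Icc 1 (2 * n)) : ∑ C ∈ π, (C ∩ s).card = s.card := by
  have : s = π.biUnion (fun C => C ∩ s) := by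
    ext x
    simp only [Finset.mem_biUnion, Finset.mem_inter]
    constructor
    · intro hx
      obtain ⟨B, hB, _⟩ := h.2 x (hs hx)
      exact ⟨B, hB.1, hB.2, hx⟩
    · rintro ⟨_, _, _, h⟩; exact h
  conv_rhs => rw [this]
  rw [Finset.card_biUnion]
  intro B hB C hC hne
  refine Finset.disjoint_left.mpr ?_
  intro x hx hx'
  simp only [Finset.mem_inter] at hx hx'
  exact hne ((h.2 x (hs hx.2)).unique ⟨hB, hx.1⟩ ⟨hC, hx'.1⟩)

lemma card_pairing {n : ℕ} {π : Finset (Finset ℕ)} (h : IsPairing n π) : π.card = n := by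
  have h1 := sum_card_inter h _ (Finset.Subset.refl _)
  rw [Finset.sum_congr rfl (g := fun _ => 2)] at h1
  · simp at h1; omega
  · intro C hC
    rw [Finset.inter_eq_left.mpr (h.1 C hC).2, (h.1 C hC).1]

lemma deg_even {n : ℕ} {π : Finset (Finset ℕ)} (h : IsPairing n π) (hp : ParityReversing π)
    {B : Finset ℕ} (hB : B ∈ π) : (π.filter (fun C => Crosses B C)).card % 2 = 0 := by
  obtain ⟨a, b, hab, rfl⟩ := card_two_ord (h.1 B hB).1
  have hsub := (h.1 _ hB).2
  have ha : a ∈ Finset.Icc 1 (2 * n) := hsub (by simp)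
  have hb : b ∈ Finset.Icc 1 (2 * n) := hsub (by simp)
  have hs : Finset.Ioo a b ⊆ Finset.Icc 1 (2 * n) := by
    intro x hx
    simp only [Finset.mem_Icc, Finset.mem_Ioo] at *
    omega
  have h1 := sum_card_inter h _ hs
  have hpar : (Finset.Ioo a b).card % 2 = 0 := by
    rw [Nat.card_Ioo]
    obtain ⟨x, y, e, hx, hy⟩ := hp _ hB
    rw [Nat.odd_iff] at hx
    rw [Nat.even_iff] at hy
    rcases lt_trichotomy x y with hl | hl | hl
    · have := pair_ord hab hl e
      omega
    · omega
    · rw [Finset.pair_comm x y] at e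
      have := pair_ord hab hl e
      omega
  rw [← h1, Finset.sum_nat_mod π 2 (fun C => (C ∩ _).card)] at hpar
  rw [Finset.card_filter]
  refine Eq.trans ?_ hpar
  congr 1
  apply Finset.sum_congr rfl
  intro C hC
  rw [card_inter_mod hab (h.1 C hC).1]
  by_cases hCB : C = {a, b}
  · exact Or.inl hCB
  · right
    constructor
    · intro hm
      exact hCB ((h.2 a ha).unique ⟨hC, hm⟩ ⟨hB, by simp⟩)
    · intro hm
      exact hCB ((h.2 b hb).unique ⟨hC, hm⟩ ⟨hB, by simp⟩)

lemma deg_ge {n : ℕ} (hn : 2 ≤ n) {π : Finset (Finset ℕ)} (h : IsPairing n π)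
    (hp : ParityReversing π) (hc : ConnectedPairing π)
    {B : Finset ℕ} (hB : B ∈ π) : 2 ≤ (π.filter (fun C => Crosses B C)).card := by
  have h0 := deg_even h hp hB
  have h1 : (π.filter (fun C => Crosses B C)).card ≠ 0 := by
    intro h0
    rw [Finset.card_eq_zero, Finset.filter_eq_empty_iff] at h0
    apply hc
    refine ⟨{B}, π.erase B, ?_, ?_, by simp, ?_, ?_⟩
    · rw [← Finset.insert_eq, Finset.insert_erase hB]
    · simp
    · rw [← Finset.card_pos, Finset.card_erase_of_mem hB, card_pairing h]
      omega
    · intro B' hB' C hC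
      rw [Finset.mem_singleton] at hB'
      subst hB'
      exact h0 (Finset.mem_of_mem_erase hC)
  omega

lemma main_bound {n : ℕ} (hn : 2 ≤ n) {π : Finset (Finset ℕ)} (h : IsPairing n π)
    (hp : ParityReversing π) (hc : ConnectedPairing π) : n ≤ crNum π := by
  have hE : crNum π = ((π ×ˢ π).filter (fun p => CrossAsym p.1 p.2)).card := by
    unfold crNum
    rw [← Set.ncard_coe_finset]
    congr 1
    ext p
    simp [and_assoc]
  have h1 : crNum π = ∑ B ∈ π, (π.filter (fun C => CrossAsym B C)).card := by
    rw [hE]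
    simp only [Finset.card_filter]
    rw [Finset.sum_product]
  have h2 : crNum π = ∑ B ∈ π, (π.filter (fun C => CrossAsym C B)).card := by
    rw [hE]
    simp only [Finset.card_filter]
    rw [Finset.sum_product_right]
  have h3 : ∑ B ∈ π, 2 ≤ ∑ B ∈ π, ((π.filter (fun C => CrossAsym B C)).card
      + (π.filter (fun C => CrossAsym C B)).card) := by
    apply Finset.sum_le_sum
    intro B hB
    refine (deg_ge hn h hp hc hB).trans ?_
    refine (Finset.card_le_card ?_).trans (Finset.card_union_le _ _)
    intro C hC
    rw [Finset.mem_filter] at hC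
    simp only [Finset.mem_union, Finset.mem_filter]
    exact hC.2.imp (fun x => ⟨hC.1, x⟩) (fun x => ⟨hC.1, x⟩)
  rw [Finset.sum_add_distrib, ← h1, ← h2, Finset.sum_const, card_pairing h, smul_eq_mul] at h3
  omega

/-- Every connected parity-reversing pairing on `[2n]` (`n ≥ 2`) has at least `n` crossings;
that is, `b_{n,k} = 0` whenever `k < n`. -/
theorem bCount_eq_zero_of_lt (n : ℕ) (hn : 2 ≤ n) :
    (∀ π : Finset (Finset ℕ), IsPairing n π → ParityReversing π → ConnectedPairing π →
      n ≤ crNum π) ∧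
    (∀ k : ℕ, k < n → bCount n k = 0) := by
  refine ⟨fun π h hp hc => main_bound hn h hp hc, fun k hk => ?_⟩
  unfold bCount
  have : {π : Finset (Finset ℕ) |
    IsPairing n π ∧ ParityReversing π ∧ ConnectedPairing π ∧ crNum π = k} = ∅ := by
    ext π
    simp only [Set.mem_ofPred_eq, Set.mem_empty_iff_false, iff_false]
    rintro ⟨h, hp, hc, e⟩
    have := main_bound hn h hp hc
    omega
  rw [this, Set.ncard_empty]
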